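/- arXiv:1303.4448 — 2 statements merged into one kernel-verified Lean document; each statement's English description precedes it below -/
import Mathlib

section
/- For N-bit binary numbers x and y and any m ≥ 0, the m-truncated addition agrees with ordinary addition modulo 2^N, i.e. x +_m y ≡ x + y (mod 2^N), if and only if the digit-sum sequence (x_i + y_i) for i = 0, 1, …, N−2 does not contain a 2 directly followed (in increasing index order) by a contiguous subsequence of m 1's; that is, if and only if there is no index j with 0 ≤ j ≤ N−2−m such that x_j + y_j = 2 and x_k + y_k = 1 for all k with j < k ≤ j + m. -/
/-!
Let `fcarry x y i` be the carry of schoolbook addition, given by `c₀ = 0` and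
`cᵢ₊₁ = ⌊(xᵢ + yᵢ + cᵢ) / 2⌋`. The binary digits of `(x + y) % 2 ^ N` are `(xᵢ + yᵢ + cᵢ) % 2`
(`add_mod_eq_sum`), so by uniqueness of binary digits (`sum_digits_inj`) the truncated sum is
correct iff the truncated carry equals `cᵢ` for every `i < N`.

The carry `cᵢ` is 1 iff some position `j < i` with digit sum 2 is followed only by digit sums 1 up
to position `i - 1` (`fcarry_eq_one_iff`); such a `j` is unique. Hence the truncated carry differs
from `cᵢ` iff this `j` satisfies `j + m < i`. In that case `j` starts a 2 followed by `m` ones;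
conversely, a 2 at `j` followed by `m` ones makes the two carries differ at `i = j + m + 1`.
-/

/-- The `i`-th binary digit of `x`. -/
def bitd (x i : ℕ) : ℕ := (x / 2 ^ i) % 2

open Classical in
/-- The `m`-truncated carry bit at position `i`: it is 1 iff there is
`i - m ≤ j < i` with `(x_j, y_j) = (1,1)` and `x_k + y_k = 1` for all `j < k < i`. -/
noncomputable def tcarry (m x y i : ℕ) : ℕ :=
  if ∃ j, i - m ≤ j ∧ j < i ∧ bitd x j = 1 ∧ bitd y j = 1 ∧
      (∀ k, j < k → k < i → bitd x k + bitd y k = 1) then 1 else 0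

/-- The `m`-truncated addition of `N`-bit numbers: the bitwise xor of `x`, `y`
and the truncated carry array. -/
noncomputable def tadd (N m x y : ℕ) : ℕ :=
  ∑ i ∈ Finset.range N, ((bitd x i + bitd y i + tcarry m x y i) % 2) * 2 ^ i

/-- The untruncated carry into position `i` in the schoolbook addition of `x` and `y`. -/
def fcarry (x y : ℕ) : ℕ → ℕ
  | 0 => 0
  | i + 1 => (bitd x i + bitd y i + fcarry x y i) / 2

lemma bitd_lt (x i : ℕ) : bitd x i < 2 := Nat.mod_lt _ (by norm_num)

lemma fcarry_lt (x y i : ℕ) : fcarry x y i < 2 := by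
  induction i with
  | zero => simp [fcarry]
  | succ i ih =>
    have := bitd_lt x i
    have := bitd_lt y i
    simp only [fcarry]
    omega

lemma tcarry_lt (m x y i : ℕ) : tcarry m x y i < 2 := by
  unfold tcarry
  split_ifs <;> norm_num

lemma fcarry_eq_one_iff (x y i : ℕ) :
    fcarry x y i = 1 ↔ ∃ j, j < i ∧ bitd x j = 1 ∧ bitd y j = 1 ∧
      ∀ k, j < k → k < i → bitd x k + bitd y k = 1 := by
  induction i with
  | zero => simp [fcarry]
  | succ i ih =>
    have hx := bitd_lt x i
    have hy := bitd_lt y i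
    have hc := fcarry_lt x y i
    simp only [fcarry]
    constructor
    · intro h
      by_cases h2 : bitd x i = 1 ∧ bitd y i = 1
      · exact ⟨i, by omega, h2.1, h2.2, fun k _ _ => by omega⟩
      · obtain ⟨j, hj, h1, h2, h3⟩ := ih.1 (by omega)
        refine ⟨j, by omega, h1, h2, fun k hk hk' => ?_⟩
        rcases Nat.lt_succ_iff_lt_or_eq.1 hk' with hlt | rfl
        · exact h3 k hk hlt
        · omega
    · rintro ⟨j, hj, h1, h2, h3⟩
      rcases Nat.lt_succ_iff_lt_or_eq.1 hj with hlt | rfl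
      · have := ih.2 ⟨j, hlt, h1, h2, fun k hk hk' => h3 k hk (by omega)⟩
        have := h3 i hlt (by omega)
        omega
      · omega

lemma mod_add_mod_eq (x y n : ℕ) :
    x % 2 ^ n + y % 2 ^ n =
      ∑ i ∈ Finset.range n, ((bitd x i + bitd y i + fcarry x y i) % 2) * 2 ^ i
        + fcarry x y n * 2 ^ n := by
  induction n with
  | zero => simp [fcarry, Nat.mod_one]
  | succ n ih =>
    rw [Finset.sum_range_succ, Nat.mod_pow_succ, Nat.mod_pow_succ]
    change x % 2 ^ n + 2 ^ n * bitd x n + (y % 2 ^ n + 2 ^ n * bitd y n) = _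
    simp only [fcarry]
    have h := Nat.mod_add_div (bitd x n + bitd y n + fcarry x y n) 2
    rw [pow_succ]
    linear_combination ih - (2 ^ n) * h

lemma sum_digits_lt (f : ℕ → ℕ) (hf : ∀ i, f i < 2) (n : ℕ) :
    ∑ i ∈ Finset.range n, f i * 2 ^ i < 2 ^ n := by
  induction n with
  | zero => simp
  | succ n ih =>
    rw [Finset.sum_range_succ, pow_succ]
    have : f n * 2 ^ n ≤ 1 * 2 ^ n := Nat.mul_le_mul_right _ (by have := hf n; omega)
    omega

lemma sum_digits_inj (f g : ℕ → ℕ) (hf : ∀ i, f i < 2) (hg : ∀ i, g i < 2) (n : ℕ)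
    (h : ∑ i ∈ Finset.range n, f i * 2 ^ i = ∑ i ∈ Finset.range n, g i * 2 ^ i) :
    ∀ i < n, f i = g i := by
  induction n with
  | zero => simp
  | succ n ih =>
    rw [Finset.sum_range_succ, Finset.sum_range_succ] at h
    have h1 := sum_digits_lt f hf n
    have h2 := sum_digits_lt g hg n
    have hfn := hf n
    have hgn := hg n
    have e : f n = g n := by
      interval_cases f n <;> interval_cases g n <;> omega
    rw [e] at h
    intro i hi
    rcases Nat.lt_succ_iff_lt_or_eq.1 hi with hlt | rfl
    · exact ih (by omega) i hlt
    · exact e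

lemma add_mod_eq_sum (x y n : ℕ) :
    (x + y) % 2 ^ n =
      ∑ i ∈ Finset.range n, ((bitd x i + bitd y i + fcarry x y i) % 2) * 2 ^ i := by
  rw [Nat.add_mod, mod_add_mod_eq, Nat.add_mul_mod_self_right,
    Nat.mod_eq_of_lt (sum_digits_lt _ (fun i => Nat.mod_lt _ (by norm_num)) n)]

lemma tadd_eq_iff_carry (N m x y : ℕ) :
    tadd N m x y = (x + y) % 2 ^ N ↔ ∀ i < N, tcarry m x y i = fcarry x y i := by
  rw [add_mod_eq_sum, tadd]
  constructor
  · intro h i hi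
    have := sum_digits_inj _ _ (fun i => Nat.mod_lt _ (by norm_num))
      (fun i => Nat.mod_lt _ (by norm_num)) N h i hi
    have := tcarry_lt m x y i
    have := fcarry_lt x y i
    omega
  · intro h
    exact Finset.sum_congr rfl fun i hi => by rw [h i (Finset.mem_range.1 hi)]

/-- `x +_m y = x + y (mod 2^N)` iff the digit-sum sequence
`(x_i + y_i)` for `0 ≤ i ≤ N - 2` contains no `2` directly followed by `m`
consecutive `1`'s, i.e. there is no `j` with `j + m ≤ N - 2` (phrased without
natural subtraction as `j + m + 2 ≤ N`) such that `x_j + y_j = 2` and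
`x_k + y_k = 1` for all `j < k ≤ j + m`. -/
theorem tadd_eq_add_iff (N m x y : ℕ) (hN : 1 ≤ N) (hx : x < 2 ^ N) (hy : y < 2 ^ N) :
    tadd N m x y = (x + y) % 2 ^ N ↔
      ¬∃ j, j + m + 2 ≤ N ∧ bitd x j + bitd y j = 2 ∧
        ∀ k, j < k → k ≤ j + m → bitd x k + bitd y k = 1 := by
  rw [tadd_eq_iff_carry]
  constructor
  · rintro h ⟨j, hj, h2, h1⟩
    have hxj := bitd_lt x j
    have hyj := bitd_lt y j
    have hc : fcarry x y (j + m + 1) = 1 := (fcarry_eq_one_iff _ _ _).2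
      ⟨j, by omega, by omega, by omega, fun k hk hk' => h1 k hk (by omega)⟩
    rw [← h (j + m + 1) (by omega), tcarry] at hc
    split_ifs at hc with hex
    -- a generating position inside the window would lie among the `m` ones
    obtain ⟨j', ha, hb, hx', hy', -⟩ := hex
    have := h1 j' (by omega) (by omega)
    omega
  · intro h i hi
    unfold tcarry
    split_ifs with hex
    · obtain ⟨j, -, hj⟩ := hex
      exact ((fcarry_eq_one_iff _ _ _).2 ⟨j, hj⟩).symm
    · have hlt := fcarry_lt x y i
      by_contra hne
      obtain ⟨j, hj, h1, h2, h3⟩ := (fcarry_eq_one_iff x y i).1 (by omega)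
      have hjm : j + m < i := by
        by_contra hcon
        exact hex ⟨j, by omega, hj, h1, h2, h3⟩
      exact h ⟨j, by omega, by omega, fun k hk hk' => h3 k hk (by omega)⟩
end

section
/- Fix m ≥ 1, and for each length ℓ let A_m(ℓ) denote the number of pairs of binary strings (x, y) of length ℓ whose digit-sum sequence avoids the pattern P(m) (a 2 directly followed, in increasing index order, by m consecutive 1's). Then for every j, A_m(j) = 4^j − Σ_{i=0}^{(j−1)−m} 2^m · 4^{j−1−m−i} · A_m(i), where the sum is empty when j ≤ m. In particular this recurrence determines A_m(j) for all j. -/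
/-- The digit-sum sequence of the pair of length-`ℓ` binary strings `(x,y)` avoids the
pattern `P(m)`: there is no index `j` (with the whole pattern inside positions
`0, …, ℓ - 1`) where the digit sum is `2` directly followed by `m` consecutive
digit sums equal to `1`. -/
def avoids (m ℓ x y : ℕ) : Prop :=
  ∀ j, j + m + 1 ≤ ℓ →
    ¬(bitd x j + bitd y j = 2 ∧ ∀ k, j < k → k ≤ j + m → bitd x k + bitd y k = 1)

open Classical in
/-- `A m ℓ` counts the pairs of length-`ℓ` binary strings whose digit-sum
sequence avoids the pattern `P(m)`. -/
noncomputable def A (m ℓ : ℕ) : ℕ :=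
  ((Finset.range (2 ^ ℓ) ×ˢ Finset.range (2 ^ ℓ)).filter fun p => avoids m ℓ p.1 p.2).card

/-- The digit sums of `(x, y)` have a `2` at `i` directly followed by `r` ones. -/
def patAt (r i x y : ℕ) : Prop :=
  bitd x i + bitd y i = 2 ∧ ∀ k, i < k → k ≤ i + r → bitd x k + bitd y k = 1

/-- The predicate `Q` on pairs depends only on the digits in positions `0, …, n - 1`. -/
def DependsBelow (n : ℕ) (Q : ℕ → ℕ → Prop) : Prop :=
  ∀ x y x' y', (∀ i < n, bitd x i = bitd x' i) → (∀ i < n, bitd y i = bitd y' i) →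
    (Q x y ↔ Q x' y')

open Classical in
/-- The number of pairs of length-`n` binary strings satisfying `P`. -/
noncomputable def cnt (n : ℕ) (P : ℕ → ℕ → Prop) : ℕ :=
  ∑ x ∈ Finset.range (2 ^ n), ∑ y ∈ Finset.range (2 ^ n), if P x y then 1 else 0

lemma A_eq_cnt (m n : ℕ) : A m n = cnt n (avoids m n) := by
  classical
  unfold A cnt
  rw [Finset.card_filter, Finset.sum_product]

lemma cnt_congr {n : ℕ} {P Q : ℕ → ℕ → Prop} (h : ∀ x y, P x y ↔ Q x y) :
    cnt n P = cnt n Q := by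
  have : P = Q := by funext x y; exact propext (h x y)
  rw [this]

lemma cnt_split (n : ℕ) (P R : ℕ → ℕ → Prop) :
    cnt n P = cnt n (fun x y => P x y ∧ ¬ R x y) + cnt n (fun x y => P x y ∧ R x y) := by
  classical
  unfold cnt
  simp only [← Finset.sum_add_distrib]
  refine Finset.sum_congr rfl fun x _ => Finset.sum_congr rfl fun y _ => ?_
  by_cases h : P x y <;> by_cases h' : R x y <;> simp [h, h']

lemma bitd_add_of_lt {n i : ℕ} (x : ℕ) (hi : i < n) : bitd (2 ^ n + x) i = bitd x i := by
  obtain ⟨d, rfl⟩ := Nat.exists_eq_add_of_lt hi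
  unfold bitd
  have : 2 ^ (i + d + 1) = 2 ^ i * (2 * 2 ^ d) := by ring
  rw [this, Nat.mul_add_div (by positivity), Nat.mul_add_mod]

lemma bitd_top_zero {n x : ℕ} (hx : x < 2 ^ n) : bitd x n = 0 := by
  simp [bitd, Nat.div_eq_of_lt hx]

lemma bitd_top_one {n x : ℕ} (hx : x < 2 ^ n) : bitd (2 ^ n + x) n = 1 := by
  simp [bitd, Nat.add_div_left, Nat.div_eq_of_lt hx]

open Classical in
/-- Appending a digit pair whose sum is constrained by `R`: of the four choices, one has sum `0`,
two have sum `1` and one has sum `2`. -/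
lemma cnt_succ {n : ℕ} {Q : ℕ → ℕ → Prop} (hQ : DependsBelow n Q) (R : ℕ → Prop) :
    cnt (n + 1) (fun x y => Q x y ∧ R (bitd x n + bitd y n)) =
      ((if R 0 then 1 else 0) + 2 * (if R 1 then 1 else 0) + (if R 2 then 1 else 0)) * cnt n Q := by
  unfold cnt
  have h2 : 2 ^ (n + 1) = 2 ^ n + 2 ^ n := by ring
  simp only [h2, Finset.sum_range_add, Finset.mul_sum, ← Finset.sum_add_distrib]
  refine Finset.sum_congr rfl fun x hx => Finset.sum_congr rfl fun y hy => ?_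
  rw [Finset.mem_range] at hx hy
  have e1 : Q (2 ^ n + x) y ↔ Q x y :=
    hQ _ _ _ _ (fun i hi => bitd_add_of_lt x hi) (fun _ _ => rfl)
  have e2 : Q x (2 ^ n + y) ↔ Q x y :=
    hQ _ _ _ _ (fun _ _ => rfl) (fun i hi => bitd_add_of_lt y hi)
  have e3 : Q (2 ^ n + x) (2 ^ n + y) ↔ Q x y :=
    hQ _ _ _ _ (fun i hi => bitd_add_of_lt x hi) (fun i hi => bitd_add_of_lt y hi)
  simp only [e1, e2, e3, bitd_top_zero hx, bitd_top_zero hy, bitd_top_one hx, bitd_top_one hy]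
  by_cases h : Q x y
  · simp only [h, true_and, zero_add, add_zero, one_add_one_eq_two, if_true]
    ring
  · simp [h]

lemma avoids_dependsBelow (m n : ℕ) : DependsBelow n (avoids m n) := by
  intro x y x' y' hx hy
  unfold avoids
  refine forall_congr' fun j => imp_congr_right fun hj => not_congr (and_congr ?_ ?_)
  · rw [hx j (by omega), hy j (by omega)]
  · refine forall_congr' fun k => imp_congr_right fun _ => imp_congr_right fun _ => ?_
    rw [hx k (by omega), hy k (by omega)]

lemma avoids_patAt_dependsBelow (m r i : ℕ) :
    DependsBelow (i + r + 1) (fun x y => avoids m i x y ∧ patAt r i x y) := by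
  intro x y x' y' hx hy
  refine and_congr (avoids_dependsBelow m i _ _ _ _ (fun k hk => hx k (by omega))
    (fun k hk => hy k (by omega))) (and_congr ?_ ?_)
  · rw [hx i (by omega), hy i (by omega)]
  · refine forall_congr' fun k => imp_congr_right fun _ => imp_congr_right fun _ => ?_
    rw [hx k (by omega), hy k (by omega)]

/-- Each `1` among the digit sums can be realised in two ways, the `2` in only one. -/
lemma cnt_avoids_patAt (m r i : ℕ) :
    cnt (i + r + 1) (fun x y => avoids m i x y ∧ patAt r i x y) = 2 ^ r * A m i := by
  induction r with
  | zero =>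
    have h := cnt_succ (avoids_dependsBelow m i) (fun s => s = 2)
    rw [← A_eq_cnt] at h
    simp only [OfNat.zero_ne_ofNat, OfNat.one_ne_ofNat, if_true, if_false] at h
    rw [pow_zero, add_zero]
    refine (cnt_congr fun x y => and_congr_right fun _ => ?_).trans (h.trans (by ring))
    exact ⟨fun h => h.1, fun h => ⟨h, fun k h1 h2 => by omega⟩⟩
  | succ r ih =>
    have h := cnt_succ (avoids_patAt_dependsBelow m r i) (fun s => s = 1)
    rw [ih] at h
    simp only [zero_ne_one, OfNat.ofNat_ne_one, if_true, if_false] at h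
    refine (cnt_congr fun x y => ?_).trans (h.trans (by ring))
    rw [and_assoc]
    refine and_congr_right fun _ => ⟨fun h => ⟨⟨h.1, fun k h1 h2 => h.2 k h1 (by omega)⟩,
      h.2 _ (by omega) (by omega)⟩, fun h => ⟨h.1.1, fun k h1 h2 => ?_⟩⟩
    rcases Nat.lt_or_ge k (i + r + 1) with hk | hk
    · exact h.1.2 k h1 (by omega)
    · obtain rfl : k = i + r + 1 := by omega
      exact h.2

lemma cnt_succ_avoids (m n : ℕ) : cnt (n + 1) (avoids m n) = 4 * A m n := by
  have h := cnt_succ (avoids_dependsBelow m n) (fun _ => True)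
  rw [← A_eq_cnt] at h
  simpa using h

lemma avoids_succ_iff (m i x y : ℕ) :
    avoids m (i + m + 1) x y ↔ avoids m (i + m) x y ∧ ¬ patAt m i x y := by
  refine ⟨fun h => ⟨fun k hk => h k (by omega), h i le_rfl⟩, fun h k hk => ?_⟩
  rcases Nat.lt_or_ge k i with hki | hki
  · exact h.1 k (by omega)
  · obtain rfl : k = i := by omega
    exact h.2

/-- A pattern at `i` overlaps no earlier one, since the digit sum at `i` is `2`, not `1`. -/
lemma avoids_and_patAt_iff (m i x y : ℕ) :
    avoids m (i + m) x y ∧ patAt m i x y ↔ avoids m i x y ∧ patAt m i x y := by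
  refine and_congr_left fun hp => ⟨fun h k hk => h k (by omega), fun h k hk hk' => ?_⟩
  rcases Nat.lt_or_ge (k + m) i with hki | hki
  · exact h k (by omega) hk'
  · have h1 := hk'.2 i (by omega) hki
    have h2 := hp.1
    omega

lemma A_step (m i : ℕ) : 4 * A m (i + m) = A m (i + m + 1) + 2 ^ m * A m i := by
  rw [← cnt_succ_avoids, cnt_split _ _ (patAt m i), A_eq_cnt m (i + m + 1),
    ← cnt_avoids_patAt m m i, cnt_congr (avoids_and_patAt_iff m i),
    cnt_congr (avoids_succ_iff m i)]

lemma A_add_sum (m j : ℕ) :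
    A m j + ∑ i ∈ Finset.range (j - m), 2 ^ m * 4 ^ (j - (i + m + 1)) * A m i = 4 ^ j := by
  induction j with
  | zero => simp [A, avoids]
  | succ j ih =>
    rcases Nat.lt_or_ge j m with hj | hj
    · have h0 : j + 1 - m = 0 := by omega
      have h0' : j - m = 0 := by omega
      rw [h0'] at ih
      rw [h0]
      simp only [Finset.range_zero, Finset.sum_empty, add_zero] at ih ⊢
      have hA : A m (j + 1) = cnt (j + 1) (avoids m j) := by
        rw [A_eq_cnt]
        -- no pattern fits into at most `m` positions
        exact cnt_congr fun x y => ⟨fun _ k hk => by omega, fun _ k hk => by omega⟩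
      rw [hA, cnt_succ_avoids, ih]
      ring
    · obtain ⟨i, rfl⟩ := Nat.exists_eq_add_of_le' hj
      have h1 : i + m + 1 - m = i + 1 := by omega
      have h2 : i + m - m = i := by omega
      rw [h2] at ih
      rw [h1, Finset.sum_range_succ, Nat.sub_self, pow_zero, mul_one]
      have hs : ∑ k ∈ Finset.range i, 2 ^ m * 4 ^ (i + m + 1 - (k + m + 1)) * A m k =
          4 * ∑ k ∈ Finset.range i, 2 ^ m * 4 ^ (i + m - (k + m + 1)) * A m k := by
        rw [Finset.mul_sum]
        refine Finset.sum_congr rfl fun k hk => ?_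
        rw [Finset.mem_range] at hk
        have : i + m + 1 - (k + m + 1) = i + m - (k + m + 1) + 1 := by omega
        rw [this, pow_succ]
        ring
      rw [hs, pow_succ, ← ih]
      have := A_step m i
      linarith

/-- the recurrence
`A_m(j) = 4^j - ∑_{i=0}^{(j-1)-m} 2^m · 4^{j-1-m-i} · A_m(i)`
(the sum being empty when `j ≤ m`). -/
theorem A_recurrence (m : ℕ) (hm : 1 ≤ m) (j : ℕ) :
    A m j = 4 ^ j - ∑ i ∈ Finset.range (j - m), 2 ^ m * 4 ^ (j - (i + m + 1)) * A m i := by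
  exact Nat.eq_sub_of_add_eq (A_add_sum m j)
end
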